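/- arXiv:1910.12442 — 10 statements merged into one kernel-verified Lean document; each statement's English description precedes it below -/
import Mathlib

section
/- With notation as in the context, the comultiplication ν̃ of the homotopical comonad K̃ = K∘F is coassociative: for every object X of 𝒞, ν̃_{K̃X} ∘ ν̃_X = K̃(ν̃_X) ∘ ν̃_X as maps K̃X → K̃(K̃(K̃X)). -/
/-!
STATEMENT 2: For a comonad `(K, ε, ν)` and a monad `(F, η, μ)` on `𝒞`, the comultiplication
`ν̃` of the homotopical comonad `K̃ = K ∘ F`, defined objectwise by
`ν̃_X := K (η_{K (F X)}) ∘ ν_{F X}`, is coassociative: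
`ν̃_{K̃X} ∘ ν̃_X = K̃ (ν̃_X) ∘ ν̃_X` for every object `X`.
-/

open CategoryTheory

universe v u

namespace Stmt2

variable {𝒞 : Type u} [Category.{v} 𝒞] (K : Comonad 𝒞) (F : Monad 𝒞)

/-- The homotopical comonad `K̃ = K ∘ F`, objectwise. -/
def KtObj (X : 𝒞) : 𝒞 := K.obj (F.obj X)

/-- The action of `K̃` on morphisms. -/
def KtMap {X Y : 𝒞} (f : X ⟶ Y) : KtObj K F X ⟶ KtObj K F Y :=
  K.map (F.map f)

/-- The comultiplication `ν̃_X := K (η_{K (F X)}) ∘ ν_{F X} : K(F X) → K(K(F X)) → K(F(K(F X)))`. -/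
def νt (X : 𝒞) : KtObj K F X ⟶ KtObj K F (KtObj K F X) :=
  K.δ.app (F.obj X) ≫ K.map (F.η.app (K.obj (F.obj X)))

section Coextension

variable {G P : 𝒞 ⥤ 𝒞} (δ : G ⟶ G ⋙ G) (η : 𝟭 𝒞 ⟶ P)

/-- The coKleisli extension `G f ∘ δ_A : G A → G B` of `f : G A → B`, for an endofunctor `G` with
a comultiplication `δ` but no counit. For a comonad it is the action on morphisms of
`Cokleisli.Adjunction.fromCokleisli`. -/
def coextend {A B : 𝒞} (f : G.obj A ⟶ B) : G.obj A ⟶ G.obj B :=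
  δ.app A ≫ G.map f

/-- The comultiplication of `G ∘ P` induced by `δ` and a point `η : 1 ⇒ P`. It is a map
`G A → G (P (G A))` for every object `A`; the case `A = P X` is `ν̃_X`. -/
def pointedComul (A : 𝒞) : G.obj A ⟶ G.obj (P.obj (G.obj A)) :=
  coextend δ (η.app (G.obj A))

theorem coextend_comp_map {A B C : 𝒞} (f : G.obj A ⟶ B) (g : B ⟶ C) :
    coextend δ f ≫ G.map g = coextend δ (f ≫ g) := by
  simp only [coextend, Category.assoc, Functor.map_comp]

variable {δ}

theorem coextend_comp_δ
    (hδ : ∀ A, δ.app A ≫ δ.app (G.obj A) = δ.app A ≫ G.map (δ.app A))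
    {A B : 𝒞} (f : G.obj A ⟶ B) :
    coextend δ f ≫ δ.app B = δ.app A ≫ G.map (coextend δ f) :=
  calc
    coextend δ f ≫ δ.app B = δ.app A ≫ δ.app (G.obj A) ≫ G.map (G.map f) := by
      simp only [coextend, Category.assoc, δ.naturality, Functor.comp_map]
    _ = δ.app A ≫ G.map (coextend δ f) := by
      rw [reassoc_of% hδ A, coextend, G.map_comp]

theorem coextend_comp_coextend
    (hδ : ∀ A, δ.app A ≫ δ.app (G.obj A) = δ.app A ≫ G.map (δ.app A))
    {A B C : 𝒞} (f : G.obj A ⟶ B) (g : G.obj B ⟶ C) :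
    coextend δ f ≫ coextend δ g = coextend δ (coextend δ f ≫ g) :=
  calc
    coextend δ f ≫ coextend δ g = (coextend δ f ≫ δ.app B) ≫ G.map g :=
      (Category.assoc _ _ _).symm
    _ = (δ.app A ≫ G.map (coextend δ f)) ≫ G.map g := by rw [coextend_comp_δ hδ]
    _ = coextend δ (coextend δ f ≫ g) := coextend_comp_map δ _ g

theorem coextend_comp_pointedComul
    (hδ : ∀ A, δ.app A ≫ δ.app (G.obj A) = δ.app A ≫ G.map (δ.app A))
    {A B : 𝒞} (f : G.obj A ⟶ B) :
    coextend δ f ≫ pointedComul δ η B =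
      pointedComul δ η A ≫ G.map (P.map (coextend δ f)) :=
  calc
    coextend δ f ≫ pointedComul δ η B = coextend δ (coextend δ f ≫ η.app (G.obj B)) :=
      coextend_comp_coextend hδ f _
    _ = coextend δ (η.app (G.obj A) ≫ P.map (coextend δ f)) :=
      congrArg (coextend δ) (η.naturality (coextend δ f))
    _ = pointedComul δ η A ≫ G.map (P.map (coextend δ f)) :=
      (coextend_comp_map δ _ _).symm

/-- Coassociativity is the naturality of `ν̃` with respect to coextensions, applied to `ν̃` itself,
which is the coextension of `η`. -/
theorem νt_coassoc_general
    (hδ : ∀ A, δ.app A ≫ δ.app (G.obj A) = δ.app A ≫ G.map (δ.app A))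
    (A : 𝒞) :
    pointedComul δ η A ≫ pointedComul δ η (P.obj (G.obj A)) =
      pointedComul δ η A ≫ G.map (P.map (pointedComul δ η A)) :=
  coextend_comp_pointedComul η hδ (η.app (G.obj A))

end Coextension

/-- Coassociativity of `ν̃`: `ν̃_{K̃X} ∘ ν̃_X = K̃(ν̃_X) ∘ ν̃_X`. -/
theorem νt_coassoc (X : 𝒞) :
    νt K F X ≫ νt K F (KtObj K F X) = νt K F X ≫ KtMap K F (νt K F X) :=
  νt_coassoc_general F.η (fun A ↦ (K.coassoc A).symm) (F.obj X)

end Stmt2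
end

section
/- With notation as in the context, the homotopical comonad K̃ = K∘F satisfies the right counit law: for every object X of 𝒞, K(μ_X) ∘ K(F(ε̃_X)) ∘ ν̃_X = id_{K̃X}, where K(F(ε̃_X)) : K(F(K(F X))) → K(F(F X)) and K(μ_X) : K(F(F X)) → K(F X). -/
/-!
STATEMENT 3: For a comonad `(K, ε, ν)` and a monad `(F, η, μ)` on `𝒞`, the homotopical comonad
`K̃ = K ∘ F` with comultiplication `ν̃_X := K (η_{K (F X)}) ∘ ν_{F X}` and counit
`ε̃_X := ε_{F X} : K(F X) → F X` satisfies the right counit law: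
`K (μ_X) ∘ K (F (ε̃_X)) ∘ ν̃_X = id_{K̃X}` for every object `X`.
-/

open CategoryTheory

universe v u

namespace Stmt3

variable {𝒞 : Type u} [Category.{v} 𝒞] (K : Comonad 𝒞) (F : Monad 𝒞)

/-- The homotopical comonad `K̃ = K ∘ F`, objectwise. -/
def KtObj (X : 𝒞) : 𝒞 := K.obj (F.obj X)

/-- The comultiplication `ν̃_X := K (η_{K (F X)}) ∘ ν_{F X}`. -/
def νt (X : 𝒞) : KtObj K F X ⟶ KtObj K F (KtObj K F X) :=
  K.δ.app (F.obj X) ≫ K.map (F.η.app (K.obj (F.obj X)))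

/-- The counit `ε̃_X := ε_{F X} : K (F X) → F X`. -/
def εt (X : 𝒞) : KtObj K F X ⟶ F.obj X :=
  K.ε.app (F.obj X)

theorem unit_comp_map_comp_retraction {T : 𝒞 ⥤ 𝒞} (η : 𝟭 𝒞 ⟶ T) {Y Z : 𝒞} (f : Z ⟶ Y)
    {a : T.obj Y ⟶ Y} (ha : η.app Y ≫ a = 𝟙 Y) :
    η.app Z ≫ T.map f ≫ a = f :=
  calc
    η.app Z ≫ T.map f ≫ a = f ≫ η.app Y ≫ a := (η.naturality_assoc f a).symm
    _ = f := by rw [ha, Category.comp_id]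

theorem νt_right_counit_general {T : 𝒞 ⥤ 𝒞} (η : 𝟭 𝒞 ⟶ T) {Y : 𝒞} {a : T.obj Y ⟶ Y}
    (ha : η.app Y ≫ a = 𝟙 Y) :
    (K.δ.app Y ≫ K.map (η.app (K.obj Y))) ≫ K.map (T.map (K.ε.app Y)) ≫ K.map a =
      𝟙 (K.obj Y) :=
  calc
    _ = K.δ.app Y ≫ K.map (η.app (K.obj Y) ≫ T.map (K.ε.app Y) ≫ a) := by
      simp only [Functor.map_comp, Category.assoc]
    _ = K.δ.app Y ≫ K.map (K.ε.app Y) := by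
      rw [unit_comp_map_comp_retraction η (K.ε.app Y) ha]
    _ = 𝟙 (K.obj Y) := K.right_counit Y

/-- The right counit law: `K(μ_X) ∘ K(F(ε̃_X)) ∘ ν̃_X = id`. -/
theorem νt_right_counit (X : 𝒞) :
    νt K F X ≫ K.map (F.map (εt K F X)) ≫ K.map (F.μ.app X) = 𝟙 (KtObj K F X) :=
  νt_right_counit_general K F.η (F.left_unit X)

end Stmt3
end

section
/- With notation as in the context, the homotopical comonad K̃ = K∘F satisfies the F-twisted left counit law: for every object X of 𝒞, μ_{K̃X} ∘ F(ε̃_{K̃X}) ∘ F(ν̃_X) = id_{F(K̃X)}, where F(ν̃_X) : F(K̃X) → F(K̃(K̃X)), F(ε̃_{K̃X}) : F(K̃(K̃X)) → F(F(K̃X)), and μ_{K̃X} : F(F(K̃X)) → F(K̃X). -/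
/-!
STATEMENT 4: For a comonad `(K, ε, ν)` and a monad `(F, η, μ)` on `𝒞`, the homotopical comonad
`K̃ = K ∘ F` with comultiplication `ν̃_X := K (η_{K (F X)}) ∘ ν_{F X}` and counit
`ε̃_X := ε_{F X}` satisfies the `F`-twisted left counit law:
`μ_{K̃X} ∘ F (ε̃_{K̃X}) ∘ F (ν̃_X) = id_{F (K̃X)}` for every object `X`.
-/

open CategoryTheory

universe v u

namespace Stmt4

variable {𝒞 : Type u} [Category.{v} 𝒞] (K : Comonad 𝒞) (F : Monad 𝒞)

/-- The homotopical comonad `K̃ = K ∘ F`, objectwise. -/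
def KtObj (X : 𝒞) : 𝒞 := K.obj (F.obj X)

/-- The comultiplication `ν̃_X := K (η_{K (F X)}) ∘ ν_{F X}`. -/
def νt (X : 𝒞) : KtObj K F X ⟶ KtObj K F (KtObj K F X) :=
  K.δ.app (F.obj X) ≫ K.map (F.η.app (K.obj (F.obj X)))

/-- The counit `ε̃_X := ε_{F X} : K (F X) → F X`. -/
def εt (X : 𝒞) : KtObj K F X ⟶ F.obj X :=
  K.ε.app (F.obj X)

theorem delta_comp_map_comp_counit {A B : 𝒞} (f : K.obj A ⟶ B) :
    K.δ.app A ≫ K.map f ≫ K.ε.app B = f := by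
  rw [K.counit_naturality, K.left_counit_assoc]

theorem νt_comp_εt (X : 𝒞) :
    νt K F X ≫ εt K F (KtObj K F X) = F.η.app (KtObj K F X) :=
  (Category.assoc _ _ _).trans
    (delta_comp_map_comp_counit K (F.η.app (KtObj K F X)))

/-- The `F`-twisted left counit law: `μ_{K̃X} ∘ F(ε̃_{K̃X}) ∘ F(ν̃_X) = id_{F(K̃X)}`. -/
theorem νt_left_counit (X : 𝒞) :
    F.map (νt K F X) ≫ F.map (εt K F (KtObj K F X)) ≫ F.μ.app (KtObj K F X)
      = 𝟙 (F.obj (KtObj K F X)) := by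
  rw [← F.map_comp_assoc, νt_comp_εt]
  exact F.right_unit (KtObj K F X)

end Stmt4
end

section
/- With notation as in the context, the homotopical monad T̃ = T∘C satisfies the C-twisted left unit law: for every object X of 𝒞, C(μ̃_X) ∘ C(η̃_{T̃X}) ∘ ν_{T̃X} = id_{C(T̃X)}, where ν_{T̃X} : C(T̃X) → C(C(T̃X)), C(η̃_{T̃X}) : C(C(T̃X)) → C(T(C(T̃X))) = C(T̃(T̃X)), and C(μ̃_X) : C(T̃(T̃X)) → C(T̃X). -/
/-!
STATEMENT 7: For a monad `(T, η, μ)` and a comonad `(C, ε, ν)` on `𝒞`, the homotopical monad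
`T̃ = T ∘ C` with multiplication `μ̃_X := μ_{C X} ∘ T (ε_{T (C X)})` and unit
`η̃_X := η_{C X}` satisfies the `C`-twisted left unit law:
`C (μ̃_X) ∘ C (η̃_{T̃X}) ∘ ν_{T̃X} = id_{C (T̃X)}` for every object `X`.
-/

open CategoryTheory

universe v u

namespace Stmt7

variable {𝒞 : Type u} [Category.{v} 𝒞] (T : Monad 𝒞) (C : Comonad 𝒞)

/-- The homotopical monad `T̃ = T ∘ C`, objectwise. -/
def TtObj (X : 𝒞) : 𝒞 := T.obj (C.obj X)

/-- The multiplication `μ̃_X := μ_{C X} ∘ T (ε_{T (C X)})`. -/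
def μt (X : 𝒞) : TtObj T C (TtObj T C X) ⟶ TtObj T C X :=
  T.map (C.ε.app (T.obj (C.obj X))) ≫ T.μ.app (C.obj X)

/-- The unit `η̃_X := η_{C X} : C X → T (C X)`. -/
def ηt (X : 𝒞) : C.obj X ⟶ TtObj T C X :=
  T.η.app (C.obj X)

variable {T} in
theorem unit_comp_map_comp_algebra_structure {Y : 𝒞} (A : T.Algebra) (f : Y ⟶ A.A) :
    T.η.app Y ≫ T.map f ≫ A.a = f :=
  calc
    T.η.app Y ≫ T.map f ≫ A.a = f ≫ T.η.app A.A ≫ A.a := (T.η.naturality_assoc f A.a).symm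
    _ = f := by rw [A.unit, Category.comp_id]

/-- A `T`-algebra `(A, a)` is acted on by `T̃` through `a ∘ T(ε_A)`; the free algebra on `C X`
gives `μ̃_X`. -/
theorem μt_left_unit_general (A : T.Algebra) :
    C.δ.app A.A ≫ C.map (T.η.app (C.obj A.A)) ≫ C.map (T.map (C.ε.app A.A) ≫ A.a)
      = 𝟙 (C.obj A.A) := by
  rw [← C.map_comp, unit_comp_map_comp_algebra_structure, C.right_counit]

/-- The `C`-twisted left unit law: `C(μ̃_X) ∘ C(η̃_{T̃X}) ∘ ν_{T̃X} = id_{C(T̃X)}`. -/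
theorem μt_left_unit (X : 𝒞) :
    C.δ.app (TtObj T C X) ≫ C.map (ηt T C (TtObj T C X)) ≫ C.map (μt T C X)
      = 𝟙 (C.obj (TtObj T C X)) :=
  μt_left_unit_general T C (T.free.obj (C.obj X))

end Stmt7
end

section
/- With notation as in the context, for every object X of 𝒞 the pair (Σ(C X), m_X) is a homotopy K̃-coalgebra, where m_X : Σ(C X) → K̃(Σ(C X)) is the composite Σ(C(Ω(η_{Σ(C X)}))) ∘ Σ(C(u_{C X})) ∘ Σ(ν_X) : Σ(C X) → Σ(C(C X)) → Σ(C(Ω(Σ(C X)))) → Σ(C(Ω(F(Σ(C X))))); that is, ν̃_{Σ(C X)} ∘ m_X = K̃(m_X) ∘ m_X and μ_{Σ(C X)} ∘ F(ε̃_{Σ(C X)}) ∘ F(m_X) = id_{F(Σ(C X))}. (In the paper this is the claim that Σ̃ʳX is a homotopy K̃-coalgebra via the Freudenthal suspension map.) -/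
/-!
STATEMENT 8: Let `Σ ⊣ Ω` be an adjunction of endofunctors of `𝒞` (unit `u`, counit `v`),
`(C, ε, ν)` a comonad and `(F, η, μ)` a monad on `𝒞`. Let `K̃ X = Σ(C(Ω(F X)))` with the
comultiplication `ν̃` and counit `ε̃` described in the paper. Then for every object `X`,
the pair `(Σ(C X), m_X)` with
`m_X := Σ(C(Ω(η_{Σ(C X)}))) ∘ Σ(C(u_{C X})) ∘ Σ(ν_X)` is a homotopy `K̃`-coalgebra:
`ν̃_{Σ(C X)} ∘ m_X = K̃(m_X) ∘ m_X` and `μ_{Σ(C X)} ∘ F(ε̃_{Σ(C X)}) ∘ F(m_X) = id_{F(Σ(C X))}`.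
-/

open CategoryTheory

universe v u

namespace Stmt8

variable {𝒞 : Type u} [Category.{v} 𝒞] (Sg Om : 𝒞 ⥤ 𝒞) (adj : Sg ⊣ Om)
variable (C : Comonad 𝒞) (F : Monad 𝒞)

/-- The homotopical comonad `K̃`, objectwise `K̃ X = Σ(C(Ω(F X)))`. -/
def KtObj (X : 𝒞) : 𝒞 := Sg.obj (C.obj (Om.obj (F.obj X)))

/-- The action of `K̃` on morphisms. -/
def KtMap {X Y : 𝒞} (f : X ⟶ Y) : KtObj Sg Om C F X ⟶ KtObj Sg Om C F Y :=
  Sg.map (C.map (Om.map (F.map f)))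

/-- The comultiplication
`ν̃_X := Σ(C(Ω(η_{Σ(C(Ω(F X)))}))) ∘ Σ(C(u_{C(Ω(F X))})) ∘ Σ(ν_{Ω(F X)})`. -/
def νt (X : 𝒞) : KtObj Sg Om C F X ⟶ KtObj Sg Om C F (KtObj Sg Om C F X) :=
  Sg.map (C.δ.app (Om.obj (F.obj X))) ≫
    Sg.map (C.map (adj.unit.app (C.obj (Om.obj (F.obj X))))) ≫
      Sg.map (C.map (Om.map (F.η.app (KtObj Sg Om C F X))))

/-- The counit `ε̃_X := v_{F X} ∘ Σ(ε_{Ω(F X)}) : Σ(C(Ω(F X))) → Σ(Ω(F X)) → F X`. -/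
def εt (X : 𝒞) : KtObj Sg Om C F X ⟶ F.obj X :=
  Sg.map (C.ε.app (Om.obj (F.obj X))) ≫ adj.counit.app (F.obj X)

/-- The Freudenthal suspension map
`m_X := Σ(C(Ω(η_{Σ(C X)}))) ∘ Σ(C(u_{C X})) ∘ Σ(ν_X) : Σ(C X) → K̃(Σ(C X))`. -/
def m (X : 𝒞) : Sg.obj (C.obj X) ⟶ KtObj Sg Om C F (Sg.obj (C.obj X)) :=
  Sg.map (C.δ.app X) ≫
    Sg.map (C.map (adj.unit.app (C.obj X))) ≫
      Sg.map (C.map (Om.map (F.η.app (Sg.obj (C.obj X)))))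

/-!
`K̃` is built from the comonad `C` and the coaugmentation `τ : 1 ⇒ Ω F Σ` whose components are the
adjoint transposes of `η_Σ`, and `m` is `Σ` applied to `D = C τ_C ∘ ν`, with `ν̃ = m_{ΩF}`.
Coassociativity holds before applying `Σ`: coassociativity of `ν` reduces it to naturality of `τ`
at `D`. Counitality holds because `ε ∘ D = τ_C` and `τ` transposes back to `η`, so `ε̃ ∘ m = η`
and the unit law of `F` applies.
-/

section Generalization

open Functor

variable {𝒜 ℬ : Type*} [Category* 𝒜] [Category* ℬ]

/-- The comultiplication of a comonad `W` with a coaugmentation `τ : 𝟭 ⟶ E` inserted between the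
two copies of `W`. -/
def coaugmentedComult (W : Comonad 𝒜) {E : 𝒜 ⥤ 𝒜} (τ : 𝟭 𝒜 ⟶ E) :
    W.toFunctor ⟶ W.toFunctor ⋙ E ⋙ W.toFunctor :=
  W.δ ≫ whiskerLeft W.toFunctor (whiskerRight τ W.toFunctor)

theorem coaugmentedComult_app (W : Comonad 𝒜) {E : 𝒜 ⥤ 𝒜} (τ : 𝟭 𝒜 ⟶ E) (X : 𝒜) :
    (coaugmentedComult W τ).app X = W.δ.app X ≫ W.map (τ.app (W.obj X)) :=
  rfl

theorem coaugmentedComult_coassoc (W : Comonad 𝒜) {E : 𝒜 ⥤ 𝒜} (τ : 𝟭 𝒜 ⟶ E) (X : 𝒜) :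
    (coaugmentedComult W τ).app X ≫ (coaugmentedComult W τ).app (E.obj (W.obj X)) =
      (coaugmentedComult W τ).app X ≫ W.map (E.map ((coaugmentedComult W τ).app X)) := by
  set D := (coaugmentedComult W τ).app X with hD
  have δ_naturality : W.map (τ.app (W.obj X)) ≫ W.δ.app (E.obj (W.obj X)) =
      W.δ.app (W.obj X) ≫ W.map (W.map (τ.app (W.obj X))) :=
    W.δ.naturality (τ.app (W.obj X))
  have τ_naturality : D ≫ τ.app (W.obj (E.obj (W.obj X))) = τ.app (W.obj X) ≫ E.map D :=
    τ.naturality D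
  calc
    D ≫ (coaugmentedComult W τ).app (E.obj (W.obj X))
    _ = W.δ.app X ≫ W.δ.app (W.obj X) ≫ W.map (W.map (τ.app (W.obj X))) ≫
          W.map (τ.app (W.obj (E.obj (W.obj X)))) := by
      simp only [hD, coaugmentedComult_app, Category.assoc, reassoc_of% δ_naturality]
    _ = W.δ.app X ≫ W.map (D ≫ τ.app (W.obj (E.obj (W.obj X)))) := by
      simp only [hD, coaugmentedComult_app, map_comp, Category.assoc, W.coassoc_assoc]
    _ = W.δ.app X ≫ W.map (τ.app (W.obj X) ≫ E.map D) := by rw [τ_naturality]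
    _ = D ≫ W.map (E.map D) := by
      simp only [hD, coaugmentedComult_app, map_comp, Category.assoc]

theorem coaugmentedComult_counit (W : Comonad 𝒜) {E : 𝒜 ⥤ 𝒜} (τ : 𝟭 𝒜 ⟶ E) (X : 𝒜) :
    (coaugmentedComult W τ).app X ≫ W.ε.app (E.obj (W.obj X)) = τ.app (W.obj X) := by
  have ε_naturality : W.map (τ.app (W.obj X)) ≫ W.ε.app (E.obj (W.obj X)) =
      W.ε.app (W.obj X) ≫ τ.app (W.obj X) :=
    W.ε.naturality (τ.app (W.obj X))
  rw [coaugmentedComult_app, Category.assoc, ε_naturality, W.left_counit_assoc]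

/-- For a monad `T`, an endofunctor `K` with maps `ν : K ⟶ K ⋙ K` and `ε : K ⟶ T`, the condition
that `a : Y ⟶ K Y` is a homotopy `K`-coalgebra: strictly coassociative, and counital after
extending along `T`. No comonad law is imposed on `(K, ν, ε)`. -/
structure IsHomotopyCoalgebra (T : Monad ℬ) {K : ℬ ⥤ ℬ} (ν : K ⟶ K ⋙ K) (ε : K ⟶ T.toFunctor)
    {Y : ℬ} (a : Y ⟶ K.obj Y) : Prop where
  coassoc : a ≫ ν.app Y = a ≫ K.map a
  counit : T.map a ≫ T.map (ε.app Y) ≫ T.μ.app Y = 𝟙 (T.obj Y)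

theorem IsHomotopyCoalgebra.of_comp_counit_eq_unit {T : Monad ℬ} {K : ℬ ⥤ ℬ}
    {ν : K ⟶ K ⋙ K} {ε : K ⟶ T.toFunctor} {Y : ℬ} {a : Y ⟶ K.obj Y}
    (coassoc : a ≫ ν.app Y = a ≫ K.map a) (counit : a ≫ ε.app Y = T.η.app Y) :
    IsHomotopyCoalgebra T ν ε a where
  coassoc := coassoc
  counit := by
    rw [← T.map_comp_assoc, counit]
    exact T.right_unit Y

variable {L : 𝒜 ⥤ ℬ} {R : ℬ ⥤ 𝒜} (h : L ⊣ R) (W : Comonad 𝒜) (T : Monad ℬ)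

/-- The coaugmentation `𝟭 ⟶ R T L` with components the adjoint transposes of the unit of `T`. -/
def transposedUnit : 𝟭 𝒜 ⟶ L ⋙ T.toFunctor ⋙ R :=
  h.unit ≫ whiskerLeft L (whiskerRight T.η R)

theorem transposedUnit_app (X : 𝒜) :
    (transposedUnit h T).app X = h.homEquiv X (T.obj (L.obj X)) (T.η.app (L.obj X)) :=
  (h.homEquiv_unit ..).symm

theorem map_transposedUnit_comp_counit (X : 𝒜) :
    L.map ((transposedUnit h T).app X) ≫ h.counit.app (T.obj (L.obj X)) =
      T.η.app (L.obj X) := by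
  rw [transposedUnit_app]
  exact (h.homEquiv_counit ..).symm.trans (Equiv.symm_apply_apply _ _)

variable (L R) in
/-- The endofunctor `K̃ = L W R T` in the two-category setting. -/
abbrev homotopyComonadFunctor : ℬ ⥤ ℬ :=
  (T.toFunctor ⋙ R) ⋙ W.toFunctor ⋙ L

/-- The Freudenthal suspension map, natural in the object of `𝒜`. -/
def freudenthalMap : W.toFunctor ⋙ L ⟶ (W.toFunctor ⋙ L) ⋙ homotopyComonadFunctor L R W T :=
  whiskerRight (coaugmentedComult W (transposedUnit h T)) L

/-- The comultiplication of `K̃`: the Freudenthal map at the objects `R T Y`. -/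
def homotopyComult :
    homotopyComonadFunctor L R W T ⟶
      homotopyComonadFunctor L R W T ⋙ homotopyComonadFunctor L R W T :=
  whiskerLeft (T.toFunctor ⋙ R) (freudenthalMap h W T)

/-- The counit of `K̃`, with values in `T` rather than in the identity functor. -/
def homotopyCounit : homotopyComonadFunctor L R W T ⟶ T.toFunctor :=
  whiskerLeft (T.toFunctor ⋙ R) (whiskerRight W.ε L) ≫ whiskerLeft T.toFunctor h.counit

theorem freudenthalMap_coassoc (X : 𝒜) :
    (freudenthalMap h W T).app X ≫ (homotopyComult h W T).app (L.obj (W.obj X)) =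
      (freudenthalMap h W T).app X ≫
        (homotopyComonadFunctor L R W T).map ((freudenthalMap h W T).app X) := by
  let D := coaugmentedComult W (transposedUnit h T)
  calc
    _ = L.map (D.app X ≫ D.app (R.obj (T.obj (L.obj (W.obj X))))) := (L.map_comp _ _).symm
    _ = L.map (D.app X ≫ W.map (R.map (T.map (L.map (D.app X))))) :=
      congrArg L.map (coaugmentedComult_coassoc W (transposedUnit h T) X)
    _ = _ := L.map_comp _ _

theorem freudenthalMap_counit (X : 𝒜) :
    (freudenthalMap h W T).app X ≫ (homotopyCounit h W T).app (L.obj (W.obj X)) =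
      T.η.app (L.obj (W.obj X)) := by
  let τ := transposedUnit h T
  calc
    _ = L.map ((coaugmentedComult W τ).app X ≫ W.ε.app (R.obj (T.obj (L.obj (W.obj X))))) ≫
          h.counit.app (T.obj (L.obj (W.obj X))) :=
      (L.map_comp_assoc _ _ _).symm
    _ = L.map (τ.app (W.obj X)) ≫ h.counit.app (T.obj (L.obj (W.obj X))) :=
      congrArg (fun f => L.map f ≫ _) (coaugmentedComult_counit W τ X)
    _ = T.η.app (L.obj (W.obj X)) := map_transposedUnit_comp_counit h T (W.obj X)

theorem suspension_is_homotopy_coalgebra_general (X : 𝒜) :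
    IsHomotopyCoalgebra T (homotopyComult h W T) (homotopyCounit h W T)
      ((freudenthalMap h W T).app X) :=
  .of_comp_counit_eq_unit (freudenthalMap_coassoc h W T X) (freudenthalMap_counit h W T X)

end Generalization

theorem m_eq_freudenthalMap (X : 𝒞) : m Sg Om adj C F X = (freudenthalMap adj C F).app X := by
  have freudenthalMap_app : (freudenthalMap adj C F).app X = Sg.map (C.δ.app X ≫
      C.map (adj.unit.app (C.obj X) ≫ Om.map (F.η.app (Sg.obj (C.obj X))))) :=
    rfl
  rw [freudenthalMap_app, C.map_comp, Sg.map_comp, Sg.map_comp]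
  rfl

theorem νt_eq_homotopyComult (X : 𝒞) : νt Sg Om adj C F X = (homotopyComult adj C F).app X :=
  m_eq_freudenthalMap Sg Om adj C F (Om.obj (F.obj X))

/-- `(Σ(C X), m_X)` is a homotopy `K̃`-coalgebra: the coassociativity condition
`ν̃_{Σ(C X)} ∘ m_X = K̃(m_X) ∘ m_X` and the counit condition
`μ_{Σ(C X)} ∘ F(ε̃_{Σ(C X)}) ∘ F(m_X) = id_{F(Σ(C X))}` hold. -/
theorem suspension_is_homotopy_coalgebra (X : 𝒞) :
    (m Sg Om adj C F X ≫ νt Sg Om adj C F (Sg.obj (C.obj X))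
      = m Sg Om adj C F X ≫ KtMap Sg Om C F (m Sg Om adj C F X)) ∧
    (F.map (m Sg Om adj C F X) ≫ F.map (εt Sg Om adj C F (Sg.obj (C.obj X))) ≫
        F.μ.app (Sg.obj (C.obj X))
      = 𝟙 (F.obj (Sg.obj (C.obj X)))) := by
  have coalgebra := suspension_is_homotopy_coalgebra_general adj C F X
  rw [νt_eq_homotopyComult, m_eq_freudenthalMap]
  exact ⟨coalgebra.coassoc, coalgebra.counit⟩

end Stmt8
end

section
/- With notation as in the context, for every object Y of 𝒞 the pair (Ω(F Y), m_Y) is a homotopy T̃-algebra, where m_Y : T̃(Ω(F Y)) → Ω(F Y) is the composite Ω(μ_Y) ∘ Ω(F(v_{F Y})) ∘ Ω(F(Σ(ε_{Ω(F Y)}))) : Ω(F(Σ(C(Ω(F Y))))) → Ω(F(Σ(Ω(F Y)))) → Ω(F(F Y)) → Ω(F Y); that is, m_Y ∘ μ̃_{Ω(F Y)} = m_Y ∘ T̃(m_Y) and C(m_Y) ∘ C(η̃_{Ω(F Y)}) ∘ ν_{Ω(F Y)} = id_{C(Ω(F Y))}. (In the paper this is the claim that Ω̃ʳY is a homotopy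 T̃-algebra via the dual Freudenthal suspension map.) -/
/-!
STATEMENT 9: Let `Σ ⊣ Ω` be an adjunction of endofunctors of `𝒞` (unit `u`, counit `v`),
`(C, ε, ν)` a comonad and `(F, η, μ)` a monad on `𝒞`. Let `T̃ X = Ω(F(Σ(C X)))` with the
multiplication `μ̃` and unit `η̃` described in the paper. Then for every object `Y`, the pair
`(Ω(F Y), m_Y)` with `m_Y := Ω(μ_Y) ∘ Ω(F(v_{F Y})) ∘ Ω(F(Σ(ε_{Ω(F Y)})))` is a homotopy
`T̃`-algebra: `m_Y ∘ μ̃_{Ω(F Y)} = m_Y ∘ T̃(m_Y)` and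
`C(m_Y) ∘ C(η̃_{Ω(F Y)}) ∘ ν_{Ω(F Y)} = id_{C(Ω(F Y))}`.
-/

open CategoryTheory

universe v u

namespace Stmt9

variable {𝒞 : Type u} [Category.{v} 𝒞] (Sg Om : 𝒞 ⥤ 𝒞) (adj : Sg ⊣ Om)
variable (C : Comonad 𝒞) (F : Monad 𝒞)

/-- The homotopical monad `T̃`, objectwise `T̃ X = Ω(F(Σ(C X)))`. -/
def TtObj (X : 𝒞) : 𝒞 := Om.obj (F.obj (Sg.obj (C.obj X)))

/-- The action of `T̃` on morphisms. -/
def TtMap {X Y : 𝒞} (f : X ⟶ Y) : TtObj Sg Om C F X ⟶ TtObj Sg Om C F Y :=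
  Om.map (F.map (Sg.map (C.map f)))

/-- The multiplication
`μ̃_X := Ω(μ_{Σ(C X)}) ∘ Ω(F(v_{F(Σ(C X))})) ∘ Ω(F(Σ(ε_{Ω(F(Σ(C X)))})))`. -/
def μt (X : 𝒞) : TtObj Sg Om C F (TtObj Sg Om C F X) ⟶ TtObj Sg Om C F X :=
  Om.map (F.map (Sg.map (C.ε.app (TtObj Sg Om C F X)))) ≫
    Om.map (F.map (adj.counit.app (F.obj (Sg.obj (C.obj X))))) ≫
      Om.map (F.μ.app (Sg.obj (C.obj X)))

/-- The unit `η̃_X := Ω(η_{Σ(C X)}) ∘ u_{C X} : C X → Ω(Σ(C X)) → Ω(F(Σ(C X)))`. -/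
def ηt (X : 𝒞) : C.obj X ⟶ TtObj Sg Om C F X :=
  adj.unit.app (C.obj X) ≫ Om.map (F.η.app (Sg.obj (C.obj X)))

/-- The dual Freudenthal suspension map
`m_Y := Ω(μ_Y) ∘ Ω(F(v_{F Y})) ∘ Ω(F(Σ(ε_{Ω(F Y)}))) : T̃(Ω(F Y)) → Ω(F Y)`. -/
def m (Y : 𝒞) : TtObj Sg Om C F (Om.obj (F.obj Y)) ⟶ Om.obj (F.obj Y) :=
  Om.map (F.map (Sg.map (C.ε.app (Om.obj (F.obj Y))))) ≫
    Om.map (F.map (adj.counit.app (F.obj Y))) ≫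
      Om.map (F.μ.app Y)

/-!
Composing `Σ ⊣ Ω` with the free–forgetful adjunction of `F` gives an adjunction `L ⊣ R` from `𝒞` to
`F`-algebras. It absorbs `F`: `T̃ = R ∘ L ∘ C`, and `m_Y` is `R` applied to the map
`L(ε) ≫ counit : L C R A ⟶ A` at the free algebra `A = F Y`. This map is natural in `A`, and the
multiplication `μ̃_X` is its `R`-image at `A = L (C X)`, so associativity is the image under `R` of
its naturality square along itself. For the unit law, `η̃ ≫ m_Y = ε` by a triangle identity of
`L ⊣ R`, and `ν ≫ C(ε) = 𝟙`.
-/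

section Adjunction

universe v' u'

variable {𝒟 : Type u'} [Category.{v'} 𝒟] {L : 𝒞 ⥤ 𝒟} {R : 𝒟 ⥤ 𝒞} (h : L ⊣ R)

/-- The counit of `L ⊣ R` precomposed with the counit of the comonad `C`; it is the counit of the
composite of `L ⊣ R` with the forgetful–cofree adjunction of `C`. -/
def resolvedCounit : R ⋙ C.toFunctor ⋙ L ⟶ 𝟭 𝒟 :=
  Functor.whiskerLeft R (Functor.whiskerRight C.ε L) ≫ h.counit

theorem resolvedCounit_app (A : 𝒟) :
    (resolvedCounit C h).app A = L.map (C.ε.app (R.obj A)) ≫ h.counit.app A :=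
  rfl

/-- The canonical map `R L C R A ⟶ R A`, generalizing the dual Freudenthal suspension map `m`. -/
def resolvedAction (A : 𝒟) : R.obj (L.obj (C.obj (R.obj A))) ⟶ R.obj A :=
  R.map ((resolvedCounit C h).app A)

/-- Homotopy algebras over `X ↦ R L C X`. The multiplication `μ̃_X` of this homotopical monad is
encoded as `resolvedAction` at `L C X`, and its unit `η̃_X` is the unit of `L ⊣ R` at `C X`. -/
structure IsHomotopyAlgebra {X : 𝒞} (a : R.obj (L.obj (C.obj X)) ⟶ X) : Prop where
  assoc : resolvedAction C h (L.obj (C.obj X)) ≫ a = R.map (L.map (C.map a)) ≫ a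
  unit : C.δ.app X ≫ C.map (h.unit.app (C.obj X)) ≫ C.map a = 𝟙 (C.obj X)

theorem resolvedAction_naturality {A B : 𝒟} (f : A ⟶ B) :
    resolvedAction C h A ≫ R.map f = R.map (L.map (C.map (R.map f))) ≫ resolvedAction C h B := by
  simpa [resolvedAction] using congrArg R.map ((resolvedCounit C h).naturality f).symm

theorem unit_comp_resolvedAction (A : 𝒟) :
    h.unit.app (C.obj (R.obj A)) ≫ resolvedAction C h A = C.ε.app (R.obj A) := by
  simp [resolvedAction, resolvedCounit_app]

theorem loops_is_homotopy_algebra_general (A : 𝒟) :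
    IsHomotopyAlgebra C h (resolvedAction C h A) where
  assoc := resolvedAction_naturality C h ((resolvedCounit C h).app A)
  unit := by
    rw [← C.map_comp, unit_comp_resolvedAction]
    exact C.right_counit (R.obj A)

end Adjunction

theorem resolvedCounit_free_f (Y : 𝒞) :
    ((resolvedCounit C (adj.comp F.adj)).app (F.free.obj Y)).f =
      F.map (Sg.map (C.ε.app (Om.obj (F.obj Y)))) ≫ F.map (adj.counit.app (F.obj Y)) ≫
        F.μ.app Y := by
  rw [resolvedCounit_app, Adjunction.comp_counit_app, Monad.adj_counit]
  rfl

theorem m_eq_resolvedAction (Y : 𝒞) :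
    m Sg Om adj C F Y = resolvedAction C (adj.comp F.adj) (F.free.obj Y) := by
  dsimp only [m, TtObj]
  rw [← Om.map_comp, ← Om.map_comp]
  exact congrArg Om.map (resolvedCounit_free_f Sg Om adj C F Y).symm

theorem μt_eq_resolvedAction (X : 𝒞) :
    μt Sg Om adj C F X = resolvedAction C (adj.comp F.adj) (F.free.obj (Sg.obj (C.obj X))) :=
  m_eq_resolvedAction Sg Om adj C F (Sg.obj (C.obj X))

theorem ηt_eq_unit (X : 𝒞) : ηt Sg Om adj C F X = (adj.comp F.adj).unit.app (C.obj X) := by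
  rw [Adjunction.comp_unit_app, Monad.adj_unit]
  rfl

/-- `(Ω(F Y), m_Y)` is a homotopy `T̃`-algebra: the associativity condition
`m_Y ∘ μ̃_{Ω(F Y)} = m_Y ∘ T̃(m_Y)` and the unit condition
`C(m_Y) ∘ C(η̃_{Ω(F Y)}) ∘ ν_{Ω(F Y)} = id_{C(Ω(F Y))}` hold. -/
theorem loops_is_homotopy_algebra (Y : 𝒞) :
    (μt Sg Om adj C F (Om.obj (F.obj Y)) ≫ m Sg Om adj C F Y
      = TtMap Sg Om C F (m Sg Om adj C F Y) ≫ m Sg Om adj C F Y) ∧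
    (C.δ.app (Om.obj (F.obj Y)) ≫ C.map (ηt Sg Om adj C F (Om.obj (F.obj Y))) ≫
        C.map (m Sg Om adj C F Y)
      = 𝟙 (C.obj (Om.obj (F.obj Y)))) := by
  rw [m_eq_resolvedAction, μt_eq_resolvedAction, ηt_eq_unit]
  obtain ⟨assoc, unit⟩ :=
    loops_is_homotopy_algebra_general C (adj.comp F.adj) (F.free.obj Y)
  exact ⟨assoc, unit⟩

end Stmt9
end

section
/- With notation as in the context, the maps ρ make G = C∘Ω∘F a right homotopical K̃-comodule: for every object X of 𝒞, (a) ρ_{K̃X} ∘ ρ_X = G(ν̃_X) ∘ ρ_X as maps G X → G(K̃(K̃X)), and (b) C(Ω(μ_X)) ∘ G(ε̃_X) ∘ ρ_X = id_{G X}, where G(ε̃_X) : G(K̃X) = C(Ω(F(K̃X))) → C(Ω(F(F X))) and C(Ω(μ_X)) : C(Ω(F(F X))) → G X. (In the paper this is the claim that C Ω̃ʳ has a right K̃-action, used to form the cobar construction 𝔠(Y) = Cobar(C Ω̃ʳ, K̃, Y).) -/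
/-!
STATEMENT 10: Let `Σ ⊣ Ω` be an adjunction of endofunctors of `𝒞` (unit `u`, counit `v`),
`(C, ε, ν)` a comonad and `(F, η, μ)` a monad on `𝒞`. Let `K̃ X = Σ(C(Ω(F X)))` with
comultiplication `ν̃` and counit `ε̃`, and let `G X = C(Ω(F X))` with
`ρ_X := C(Ω(η_{Σ(C(Ω(F X)))})) ∘ C(u_{C(Ω(F X))}) ∘ ν_{Ω(F X)} : G X → G(K̃X)`.
Then `ρ` makes `G` a right homotopical `K̃`-comodule: for every `X`,
(a) `ρ_{K̃X} ∘ ρ_X = G(ν̃_X) ∘ ρ_X`, and (b) `C(Ω(μ_X)) ∘ G(ε̃_X) ∘ ρ_X = id_{G X}`.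
-/

open CategoryTheory

universe v u

namespace Stmt10

variable {𝒞 : Type u} [Category.{v} 𝒞] (Sg Om : 𝒞 ⥤ 𝒞) (adj : Sg ⊣ Om)
variable (C : Comonad 𝒞) (F : Monad 𝒞)

/-- The homotopical comonad `K̃`, objectwise `K̃ X = Σ(C(Ω(F X)))`. -/
def KtObj (X : 𝒞) : 𝒞 := Sg.obj (C.obj (Om.obj (F.obj X)))

/-- The comultiplication
`ν̃_X := Σ(C(Ω(η_{Σ(C(Ω(F X)))}))) ∘ Σ(C(u_{C(Ω(F X))})) ∘ Σ(ν_{Ω(F X)})`. -/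
def νt (X : 𝒞) : KtObj Sg Om C F X ⟶ KtObj Sg Om C F (KtObj Sg Om C F X) :=
  Sg.map (C.δ.app (Om.obj (F.obj X))) ≫
    Sg.map (C.map (adj.unit.app (C.obj (Om.obj (F.obj X))))) ≫
      Sg.map (C.map (Om.map (F.η.app (KtObj Sg Om C F X))))

/-- The counit `ε̃_X := v_{F X} ∘ Σ(ε_{Ω(F X)}) : Σ(C(Ω(F X))) → Σ(Ω(F X)) → F X`. -/
def εt (X : 𝒞) : KtObj Sg Om C F X ⟶ F.obj X :=
  Sg.map (C.ε.app (Om.obj (F.obj X))) ≫ adj.counit.app (F.obj X)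

/-- The endofunctor `G`, objectwise `G X = C(Ω(F X))`. -/
def GObj (X : 𝒞) : 𝒞 := C.obj (Om.obj (F.obj X))

/-- The action of `G` on morphisms. -/
def GMap {X Y : 𝒞} (f : X ⟶ Y) : GObj Om C F X ⟶ GObj Om C F Y :=
  C.map (Om.map (F.map f))

/-- The right coaction
`ρ_X := C(Ω(η_{Σ(C(Ω(F X)))})) ∘ C(u_{C(Ω(F X))}) ∘ ν_{Ω(F X)} : G X → G(K̃X)`. -/
def ρ (X : 𝒞) : GObj Om C F X ⟶ GObj Om C F (KtObj Sg Om C F X) :=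
  C.δ.app (Om.obj (F.obj X)) ≫
    C.map (adj.unit.app (C.obj (Om.obj (F.obj X)))) ≫
      C.map (Om.map (F.η.app (KtObj Sg Om C F X)))

/-! Let `P ⊣ Q` be the composite of the forgetful/cofree adjunction of `C`, the adjunction `Σ ⊣ Ω`
and the free/forgetful adjunction of `F`. On the free `F`-algebra `F X`, the `C`-coalgebra `Q (F X)`
has underlying object `G X`, and the unit of `P ⊣ Q` at `Q (F X)` is `ρ_X`. Any right adjoint is,
via the unit, a right comodule over the comonad of its adjunction: coassociativity is naturality of
the unit and counitality is a triangle identity. -/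

section Adjunction

universe v₁ v₂ u₁ u₂

variable {𝒜 : Type u₁} [Category.{v₁} 𝒜] {ℬ : Type u₂} [Category.{v₂} ℬ]
  {L : 𝒜 ⥤ ℬ} {R : ℬ ⥤ 𝒜} (h : L ⊣ R) (D : Comonad 𝒜) (T : Monad ℬ)

/-- The adjunction between `D`-coalgebras and `T`-algebras obtained from `L ⊣ R` by composing with
the forgetful/cofree adjunction of `D` and the free/forgetful adjunction of `T`. -/
def coalgebraAlgebraAdj : D.forget ⋙ L ⋙ T.free ⊣ (T.forget ⋙ R) ⋙ D.cofree :=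
  D.adj.comp (h.comp T.adj)

/-- The right coaction `D R Y ⟶ D R T L D R Y`; it is `ρ_X` when `Y = F X`. -/
def coaction (Y : ℬ) :
    D.obj (R.obj Y) ⟶ D.obj (R.obj (T.obj (L.obj (D.obj (R.obj Y))))) :=
  D.δ.app (R.obj Y) ≫
    D.map (h.unit.app (D.obj (R.obj Y))) ≫
      D.map (R.map (T.η.app (L.obj (D.obj (R.obj Y)))))

theorem coalgebraAlgebraAdj_unit_app_cofree_f (Y : ℬ) :
    ((coalgebraAlgebraAdj h D T).unit.app (D.cofree.obj (R.obj Y))).f = coaction h D T Y := by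
  simp only [coalgebraAlgebraAdj, coaction, Adjunction.comp_unit_app, Comonad.adj_unit,
    Monad.adj_unit, Functor.map_comp]
  rfl

theorem coalgebraAlgebraAdj_counit_app_f (Y : T.Algebra) :
    ((coalgebraAlgebraAdj h D T).counit.app Y).f =
      T.map (L.map (D.ε.app (R.obj Y.A)) ≫ h.counit.app Y.A) ≫ Y.a := by
  simp only [coalgebraAlgebraAdj, Adjunction.comp_counit_app, Comonad.adj_counit, Monad.adj_counit,
    Functor.map_comp, Category.assoc]
  rfl

theorem coaction_coassoc (Y : ℬ) :
    coaction h D T Y ≫ coaction h D T (T.obj (L.obj (D.obj (R.obj Y)))) =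
      coaction h D T Y ≫ D.map (R.map (T.map (L.map (coaction h D T Y)))) := by
  let unit := (coalgebraAlgebraAdj h D T).unit
  have naturality := unit.naturality (unit.app (D.cofree.obj (R.obj Y)))
  simp only [← coalgebraAlgebraAdj_unit_app_cofree_f]
  exact congrArg Comonad.Coalgebra.Hom.f naturality

theorem coaction_counit (Y : T.Algebra) :
    coaction h D T Y.A ≫
        D.map (R.map (T.map (L.map (D.ε.app (R.obj Y.A)) ≫ h.counit.app Y.A))) ≫
          D.map (R.map Y.a) =
      𝟙 (D.obj (R.obj Y.A)) := by
  have triangle := (coalgebraAlgebraAdj h D T).right_triangle_components Y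
  rw [← D.map_comp, ← R.map_comp, ← coalgebraAlgebraAdj_unit_app_cofree_f,
    ← coalgebraAlgebraAdj_counit_app_f h D T]
  exact congrArg Comonad.Coalgebra.Hom.f triangle

theorem G_is_right_comodule_general (Y : T.Algebra) :
    (coaction h D T Y.A ≫ coaction h D T (T.obj (L.obj (D.obj (R.obj Y.A)))) =
      coaction h D T Y.A ≫ D.map (R.map (T.map (L.map (coaction h D T Y.A))))) ∧
    (coaction h D T Y.A ≫
        D.map (R.map (T.map (L.map (D.ε.app (R.obj Y.A)) ≫ h.counit.app Y.A))) ≫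
          D.map (R.map Y.a) =
      𝟙 (D.obj (R.obj Y.A))) :=
  ⟨coaction_coassoc h D T Y.A, coaction_counit h D T Y⟩

end Adjunction

theorem νt_eq_map_coaction (X : 𝒞) :
    νt Sg Om adj C F X = Sg.map (coaction adj C F (F.obj X)) := by
  simp only [νt, coaction, Functor.map_comp]
  rfl

/-- `ρ` makes `G = C∘Ω∘F` a right homotopical `K̃`-comodule:
(a) `ρ_{K̃X} ∘ ρ_X = G(ν̃_X) ∘ ρ_X` and (b) `C(Ω(μ_X)) ∘ G(ε̃_X) ∘ ρ_X = id_{G X}`. -/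
theorem G_is_right_comodule (X : 𝒞) :
    (ρ Sg Om adj C F X ≫ ρ Sg Om adj C F (KtObj Sg Om C F X)
      = ρ Sg Om adj C F X ≫ GMap Om C F (νt Sg Om adj C F X)) ∧
    (ρ Sg Om adj C F X ≫ GMap Om C F (εt Sg Om adj C F X) ≫ C.map (Om.map (F.μ.app X))
      = 𝟙 (GObj Om C F X)) := by
  rw [νt_eq_map_coaction]
  exact G_is_right_comodule_general adj C F (F.free.obj X)

end Stmt10
end

section
/- With notation as in the context, the maps σ make H = F∘Σ∘C a right homotopical T̃-module: for every object X of 𝒞, (a) σ_X ∘ H(μ̃_X) = σ_X ∘ σ_{T̃X} as maps H(T̃(T̃X)) → H X, and (b) σ_X ∘ ŝ_X = id_{H X}, where ŝ_X : H X → H(T̃X) is the composite F(Σ(C(Ω(η_{Σ(C X)})))) ∘ F(Σ(C(u_{C X}))) ∘ F(Σ(ν_X)). (In the paper this is the claim that F Σ̃ʳ has a right T̃-action, used to form the bar construction 𝔟(X) = Bar(F Σ̃ʳ, T̃, X).) -/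
/-!
STATEMENT 11: Let `Σ ⊣ Ω` be an adjunction of endofunctors of `𝒞` (unit `u`, counit `v`),
`(C, ε, ν)` a comonad and `(F, η, μ)` a monad on `𝒞`. Let `T̃ X = Ω(F(Σ(C X)))` with
multiplication `μ̃` and unit `η̃`, and let `H X = F(Σ(C X))` with
`σ_X := μ_{Σ(C X)} ∘ F(v_{F(Σ(C X))}) ∘ F(Σ(ε_{Ω(F(Σ(C X)))})) : H(T̃X) → H X`.
Then `σ` makes `H` a right homotopical `T̃`-module: for every `X`,
(a) `σ_X ∘ H(μ̃_X) = σ_X ∘ σ_{T̃X}`, and (b) `σ_X ∘ ŝ_X = id_{H X}`, where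
`ŝ_X := F(Σ(C(Ω(η_{Σ(C X)})))) ∘ F(Σ(C(u_{C X}))) ∘ F(Σ(ν_X)) : H X → H(T̃X)`.
-/

open CategoryTheory

universe v u

namespace Stmt11

variable {𝒞 : Type u} [Category.{v} 𝒞] (Sg Om : 𝒞 ⥤ 𝒞) (adj : Sg ⊣ Om)
variable (C : Comonad 𝒞) (F : Monad 𝒞)

/-- The homotopical monad `T̃`, objectwise `T̃ X = Ω(F(Σ(C X)))`. -/
def TtObj (X : 𝒞) : 𝒞 := Om.obj (F.obj (Sg.obj (C.obj X)))

/-- The multiplication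
`μ̃_X := Ω(μ_{Σ(C X)}) ∘ Ω(F(v_{F(Σ(C X))})) ∘ Ω(F(Σ(ε_{Ω(F(Σ(C X)))})))`. -/
def μt (X : 𝒞) : TtObj Sg Om C F (TtObj Sg Om C F X) ⟶ TtObj Sg Om C F X :=
  Om.map (F.map (Sg.map (C.ε.app (TtObj Sg Om C F X)))) ≫
    Om.map (F.map (adj.counit.app (F.obj (Sg.obj (C.obj X))))) ≫
      Om.map (F.μ.app (Sg.obj (C.obj X)))

/-- The endofunctor `H`, objectwise `H X = F(Σ(C X))`. -/
def HObj (X : 𝒞) : 𝒞 := F.obj (Sg.obj (C.obj X))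

/-- The action of `H` on morphisms. -/
def HMap {X Y : 𝒞} (f : X ⟶ Y) : HObj Sg C F X ⟶ HObj Sg C F Y :=
  F.map (Sg.map (C.map f))

/-- The right action
`σ_X := μ_{Σ(C X)} ∘ F(v_{F(Σ(C X))}) ∘ F(Σ(ε_{Ω(F(Σ(C X)))})) : H(T̃X) → H X`. -/
def σ (X : 𝒞) : HObj Sg C F (TtObj Sg Om C F X) ⟶ HObj Sg C F X :=
  F.map (Sg.map (C.ε.app (TtObj Sg Om C F X))) ≫
    F.map (adj.counit.app (F.obj (Sg.obj (C.obj X)))) ≫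
      F.μ.app (Sg.obj (C.obj X))

/-- The map `ŝ_X := F(Σ(C(Ω(η_{Σ(C X)})))) ∘ F(Σ(C(u_{C X}))) ∘ F(Σ(ν_X)) : H X → H(T̃X)`. -/
def shat (X : 𝒞) : HObj Sg C F X ⟶ HObj Sg C F (TtObj Sg Om C F X) :=
  F.map (Sg.map (C.δ.app X)) ≫
    F.map (Sg.map (C.map (adj.unit.app (C.obj X)))) ≫
      F.map (Sg.map (C.map (Om.map (F.η.app (Sg.obj (C.obj X))))))

/-!
Compose `Σ ⊣ Ω` with the forgetful-cofree adjunction of `C` and the free-forgetful adjunction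
of `F` to get an adjunction between `C`-coalgebras and `F`-algebras. Its counit at the free algebra
on `Σ(C X)` is `σ_X`, and `F Σ` sends its unit at the cofree coalgebra on `X` to `ŝ_X`. Since
`μ̃_X = Ω(σ_X)`, part (a) is the naturality square of the counit at its own component, and part (b)
is a triangle identity.
-/

universe v' u'

section CompositeAdjunction

variable {𝒟 : Type u'} [Category.{v'} 𝒟] {L : 𝒞 ⥤ 𝒟} {R : 𝒟 ⥤ 𝒞} (h : L ⊣ R)
variable (T : Monad 𝒟)

/-- The adjunction from `C`-coalgebras to `T`-algebras obtained by composing `L ⊣ R` with the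
forgetful-cofree adjunction of `C` and the free-forgetful adjunction of `T`. -/
def coalgebraAlgebraAdj : C.forget ⋙ L ⋙ T.free ⊣ (T.forget ⋙ R) ⋙ C.cofree :=
  C.adj.comp (h.comp T.adj)

/-- The map `T L C R A ⟶ A` for a `T`-algebra `A`: the counit of `coalgebraAlgebraAdj`, written out.
At the free algebra on `Σ(C X)` it is `σ_X`. -/
def algebraAction (A : T.Algebra) : T.obj (L.obj (C.obj (R.obj A.A))) ⟶ A.A :=
  T.map (L.map (C.ε.app (R.obj A.A))) ≫ T.map (h.counit.app A.A) ≫ A.a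

/-- The map `T L B ⟶ T L C R T L B` for a `C`-coalgebra `B`: the image under `T L` of the unit of
`coalgebraAlgebraAdj`, written out. At the cofree coalgebra on `X` it is `ŝ_X`. -/
def coalgebraSection (B : C.Coalgebra) :
    T.obj (L.obj B.A) ⟶ T.obj (L.obj (C.obj (R.obj (T.obj (L.obj B.A))))) :=
  T.map (L.map B.a) ≫
    T.map (L.map (C.map (h.unit.app B.A))) ≫
      T.map (L.map (C.map (R.map (T.η.app (L.obj B.A)))))

theorem coalgebraAlgebraAdj_counit_app_f (A : T.Algebra) :
    ((coalgebraAlgebraAdj C h T).counit.app A).f = algebraAction C h T A := by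
  simp only [coalgebraAlgebraAdj, Adjunction.comp_counit_app, Monad.Algebra.comp_f,
    Comonad.adj_counit, Monad.adj_counit, algebraAction]
  rfl

theorem map_coalgebraAlgebraAdj_unit_app_f (B : C.Coalgebra) :
    T.map (L.map ((coalgebraAlgebraAdj C h T).unit.app B).f) = coalgebraSection C h T B := by
  simp only [coalgebraSection, ← Functor.map_comp]
  simp only [coalgebraAlgebraAdj, Adjunction.comp_unit_app, Comonad.adj_unit, Monad.adj_unit]
  rfl

theorem map_algebraAction_comp_algebraAction (A : T.Algebra) :
    T.map (L.map (C.map (R.map (algebraAction C h T A)))) ≫ algebraAction C h T A =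
      algebraAction C h T (T.free.obj (L.obj (C.obj (R.obj A.A)))) ≫ algebraAction C h T A := by
  have naturality := (coalgebraAlgebraAdj C h T).counit.naturality
    ((coalgebraAlgebraAdj C h T).counit.app A)
  have underlying := congrArg Monad.Algebra.Hom.f naturality
  simp only [← coalgebraAlgebraAdj_counit_app_f]
  exact underlying

theorem coalgebraSection_comp_algebraAction (B : C.Coalgebra) :
    coalgebraSection C h T B ≫ algebraAction C h T (T.free.obj (L.obj B.A)) =
      𝟙 (T.obj (L.obj B.A)) := by
  have triangle := (coalgebraAlgebraAdj C h T).left_triangle_components B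
  have underlying := congrArg Monad.Algebra.Hom.f triangle
  rw [← map_coalgebraAlgebraAdj_unit_app_f, ← coalgebraAlgebraAdj_counit_app_f]
  exact underlying

theorem H_is_right_module_general (A : T.Algebra) (B : C.Coalgebra) :
    (T.map (L.map (C.map (R.map (algebraAction C h T A)))) ≫ algebraAction C h T A =
      algebraAction C h T (T.free.obj (L.obj (C.obj (R.obj A.A)))) ≫ algebraAction C h T A) ∧
    (coalgebraSection C h T B ≫ algebraAction C h T (T.free.obj (L.obj B.A)) =
      𝟙 (T.obj (L.obj B.A))) :=
  ⟨map_algebraAction_comp_algebraAction C h T A, coalgebraSection_comp_algebraAction C h T B⟩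

end CompositeAdjunction

theorem μt_eq_map_σ (X : 𝒞) : μt Sg Om adj C F X = Om.map (σ Sg Om adj C F X) := by
  simp only [μt, σ, HObj, Functor.map_comp]
  rfl

/-- `σ` makes `H = F∘Σ∘C` a right homotopical `T̃`-module:
(a) `σ_X ∘ H(μ̃_X) = σ_X ∘ σ_{T̃X}` and (b) `σ_X ∘ ŝ_X = id_{H X}`. -/
theorem H_is_right_module (X : 𝒞) :
    (HMap Sg C F (μt Sg Om adj C F X) ≫ σ Sg Om adj C F X
      = σ Sg Om adj C F (TtObj Sg Om C F X) ≫ σ Sg Om adj C F X) ∧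
    (shat Sg Om adj C F X ≫ σ Sg Om adj C F X = 𝟙 (HObj Sg C F X)) := by
  rw [μt_eq_map_σ]
  exact H_is_right_module_general C adj F (F.free.obj (Sg.obj (C.obj X))) (C.cofree.obj X)

end Stmt11
end

section
/- With notation as in the context, the Freudenthal suspension map coaugments the cobar construction: for every object X of 𝒞, letting c_X : C X → G(Σ(C X)) be the composite C(Ω(η_{Σ(C X)})) ∘ C(u_{C X}) ∘ ν_X : C X → C(C X) → C(Ω(Σ(C X))) → C(Ω(F(Σ(C X)))), and letting m_X : Σ(C X) → K̃(Σ(C X)) be the composite Σ(C(Ω(η_{Σ(C X)}))) ∘ Σ(C(u_{C X})) ∘ Σ(ν_X), one has ρ_{Σ(C X)} ∘ c_X = G(m_X) ∘ c_X as maps C X → G(K̃(Σ(C X))). (In the paper this is the claim that the Freudenthal suspension map augments 𝔠(Σ̃ʳX), yielding the coaugmented cosimplicial Freudenthal resolution.) -/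
/-!
STATEMENT 12: Let `Σ ⊣ Ω` be an adjunction of endofunctors of `𝒞` (unit `u`, counit `v`),
`(C, ε, ν)` a comonad and `(F, η, μ)` a monad on `𝒞`. With `K̃ X = Σ(C(Ω(F X)))`,
`G X = C(Ω(F X))` and the coaction `ρ` as in the paper, the Freudenthal suspension map
coaugments the cobar construction: for every object `X`, letting
`c_X := C(Ω(η_{Σ(C X)})) ∘ C(u_{C X}) ∘ ν_X : C X → G(Σ(C X))` and
`m_X := Σ(C(Ω(η_{Σ(C X)}))) ∘ Σ(C(u_{C X})) ∘ Σ(ν_X) : Σ(C X) → K̃(Σ(C X))`, one has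
`ρ_{Σ(C X)} ∘ c_X = G(m_X) ∘ c_X` as maps `C X → G(K̃(Σ(C X)))`.
-/

open CategoryTheory

universe v u

namespace Stmt12

variable {𝒞 : Type u} [Category.{v} 𝒞] (Sg Om : 𝒞 ⥤ 𝒞) (adj : Sg ⊣ Om)
variable (C : Comonad 𝒞) (F : Monad 𝒞)

/-- The homotopical comonad `K̃`, objectwise `K̃ X = Σ(C(Ω(F X)))`. -/
def KtObj (X : 𝒞) : 𝒞 := Sg.obj (C.obj (Om.obj (F.obj X)))

/-- The endofunctor `G`, objectwise `G X = C(Ω(F X))`. -/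
def GObj (X : 𝒞) : 𝒞 := C.obj (Om.obj (F.obj X))

/-- The action of `G` on morphisms. -/
def GMap {X Y : 𝒞} (f : X ⟶ Y) : GObj Om C F X ⟶ GObj Om C F Y :=
  C.map (Om.map (F.map f))

/-- The right coaction
`ρ_X := C(Ω(η_{Σ(C(Ω(F X)))})) ∘ C(u_{C(Ω(F X))}) ∘ ν_{Ω(F X)} : G X → G(K̃X)`. -/
def ρ (X : 𝒞) : GObj Om C F X ⟶ GObj Om C F (KtObj Sg Om C F X) :=
  C.δ.app (Om.obj (F.obj X)) ≫
    C.map (adj.unit.app (C.obj (Om.obj (F.obj X)))) ≫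
      C.map (Om.map (F.η.app (KtObj Sg Om C F X)))

/-- The coaugmentation `c_X := C(Ω(η_{Σ(C X)})) ∘ C(u_{C X}) ∘ ν_X : C X → G(Σ(C X))`. -/
def c (X : 𝒞) : C.obj X ⟶ GObj Om C F (Sg.obj (C.obj X)) :=
  C.δ.app X ≫
    C.map (adj.unit.app (C.obj X)) ≫
      C.map (Om.map (F.η.app (Sg.obj (C.obj X))))

/-- The Freudenthal suspension map
`m_X := Σ(C(Ω(η_{Σ(C X)}))) ∘ Σ(C(u_{C X})) ∘ Σ(ν_X) : Σ(C X) → K̃(Σ(C X))`. -/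
def m (X : 𝒞) : Sg.obj (C.obj X) ⟶ KtObj Sg Om C F (Sg.obj (C.obj X)) :=
  Sg.map (C.δ.app X) ≫
    Sg.map (C.map (adj.unit.app (C.obj X))) ≫
      Sg.map (C.map (Om.map (F.η.app (Sg.obj (C.obj X)))))

/-- The pointing of `R T L` obtained from a pointed endofunctor `(T, h)` and an adjunction
`L ⊣ R`: the adjunct of `h_{L X} : L X ⟶ T L X`. -/
def adjunctPointing {𝒟 ℰ : Type*} [Category* 𝒟] [Category* ℰ] {L : 𝒟 ⥤ ℰ} {R : ℰ ⥤ 𝒟}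
    (adjLR : L ⊣ R) {T : ℰ ⥤ ℰ} (h : 𝟭 ℰ ⟶ T) : 𝟭 𝒟 ⟶ L ⋙ T ⋙ R :=
  adjLR.unit ≫ Functor.whiskerLeft L (Functor.whiskerRight h R)

theorem comonadAdj_unit_app_f (A : C.Coalgebra) : (C.adj.unit.app A).f = A.a :=
  (congrArg (A.a ≫ ·) (C.map_id A.A)).trans (Category.comp_id A.a)

theorem adjunctPointing_comonadAdj_app_f {T : 𝒞 ⥤ 𝒞} (h : 𝟭 𝒞 ⟶ T) (A : C.Coalgebra) :
    ((adjunctPointing C.adj h).app A).f = A.a ≫ C.map (h.app A.A) :=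
  congrArg (· ≫ C.map (h.app A.A)) (comonadAdj_unit_app_f C A)

-- The map `A.a ≫ C.map (h.app A.A)` underlies a component of a pointing on `C`-coalgebras; the
-- identity is naturality of that pointing with respect to its own component.
theorem freudenthal_coaugments_general {T : 𝒞 ⥤ 𝒞} (h : 𝟭 𝒞 ⟶ T) (A : C.Coalgebra) :
    (A.a ≫ C.map (h.app A.A)) ≫ C.δ.app (T.obj A.A) ≫ C.map (h.app (C.obj (T.obj A.A))) =
      (A.a ≫ C.map (h.app A.A)) ≫ C.map (T.map (A.a ≫ C.map (h.app A.A))) := by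
  let p := adjunctPointing C.adj h
  have self_naturality :
      (p.app A).f ≫ (p.app (C.cofree.obj (T.obj A.A))).f =
        (p.app A).f ≫ C.map (T.map (p.app A).f) :=
    congrArg Comonad.Coalgebra.Hom.f (p.naturality (p.app A))
  simp only [p, adjunctPointing_comonadAdj_app_f] at self_naturality
  exact self_naturality

theorem c_eq_δ_comp_map_adjunctPointing (X : 𝒞) :
    c Sg Om adj C F X = C.δ.app X ≫ C.map ((adjunctPointing adj F.η).app (C.obj X)) :=
  congrArg (C.δ.app X ≫ ·) (C.map_comp _ _).symm

theorem ρ_eq_c (X : 𝒞) : ρ Sg Om adj C F X = c Sg Om adj C F (Om.obj (F.obj X)) :=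
  rfl

theorem m_eq_map_c (X : 𝒞) : m Sg Om adj C F X = Sg.map (c Sg Om adj C F X) := by
  simp only [m, c, KtObj, GObj, Functor.map_comp]

/-- The Freudenthal suspension map coaugments the cobar construction:
`ρ_{Σ(C X)} ∘ c_X = G(m_X) ∘ c_X`. -/
theorem freudenthal_coaugments (X : 𝒞) :
    c Sg Om adj C F X ≫ ρ Sg Om adj C F (Sg.obj (C.obj X))
      = c Sg Om adj C F X ≫ GMap Om C F (m Sg Om adj C F X) := by
  rw [ρ_eq_c, m_eq_map_c]
  simp only [c_eq_δ_comp_map_adjunctPointing]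
  exact freudenthal_coaugments_general C (adjunctPointing adj F.η) (C.cofree.obj X)

end Stmt12
end

section
/- With notation as in the context, the dual Freudenthal suspension map augments the bar construction: for every object Y of 𝒞, letting a_Y : H(Ω(F Y)) → F Y be the composite μ_Y ∘ F(v_{F Y}) ∘ F(Σ(ε_{Ω(F Y)})) : F(Σ(C(Ω(F Y)))) → F(Σ(Ω(F Y))) → F(F Y) → F Y, and letting m_Y : T̃(Ω(F Y)) → Ω(F Y) be the composite Ω(μ_Y) ∘ Ω(F(v_{F Y})) ∘ Ω(F(Σ(ε_{Ω(F Y)}))), one has a_Y ∘ σ_{Ω(F Y)} = a_Y ∘ H(m_Y) as maps H(T̃(Ω(F Y))) → F Y. (In the paper this is the claim that the dual Freudenthal suspension map coaugments 𝔟(Ω̃ʳY), yielding the augmented simplicial dual Freudenthal resolution.) -/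
/-!
STATEMENT 13: Let `Σ ⊣ Ω` be an adjunction of endofunctors of `𝒞` (unit `u`, counit `v`),
`(C, ε, ν)` a comonad and `(F, η, μ)` a monad on `𝒞`. With `T̃ X = Ω(F(Σ(C X)))`,
`H X = F(Σ(C X))` and the action `σ` as in the paper, the dual Freudenthal suspension map
augments the bar construction: for every object `Y`, letting
`a_Y := μ_Y ∘ F(v_{F Y}) ∘ F(Σ(ε_{Ω(F Y)})) : H(Ω(F Y)) → F Y` and
`m_Y := Ω(μ_Y) ∘ Ω(F(v_{F Y})) ∘ Ω(F(Σ(ε_{Ω(F Y)}))) : T̃(Ω(F Y)) → Ω(F Y)`, one has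
`a_Y ∘ σ_{Ω(F Y)} = a_Y ∘ H(m_Y)` as maps `H(T̃(Ω(F Y))) → F Y`.
-/

open CategoryTheory

universe v u

namespace Stmt13

variable {𝒞 : Type u} [Category.{v} 𝒞] (Sg Om : 𝒞 ⥤ 𝒞) (adj : Sg ⊣ Om)
variable (C : Comonad 𝒞) (F : Monad 𝒞)

/-- The homotopical monad `T̃`, objectwise `T̃ X = Ω(F(Σ(C X)))`. -/
def TtObj (X : 𝒞) : 𝒞 := Om.obj (F.obj (Sg.obj (C.obj X)))

/-- The endofunctor `H`, objectwise `H X = F(Σ(C X))`. -/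
def HObj (X : 𝒞) : 𝒞 := F.obj (Sg.obj (C.obj X))

/-- The action of `H` on morphisms. -/
def HMap {X Y : 𝒞} (f : X ⟶ Y) : HObj Sg C F X ⟶ HObj Sg C F Y :=
  F.map (Sg.map (C.map f))

/-- The right action
`σ_X := μ_{Σ(C X)} ∘ F(v_{F(Σ(C X))}) ∘ F(Σ(ε_{Ω(F(Σ(C X)))})) : H(T̃X) → H X`. -/
def σ (X : 𝒞) : HObj Sg C F (TtObj Sg Om C F X) ⟶ HObj Sg C F X :=
  F.map (Sg.map (C.ε.app (TtObj Sg Om C F X))) ≫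
    F.map (adj.counit.app (F.obj (Sg.obj (C.obj X)))) ≫
      F.μ.app (Sg.obj (C.obj X))

/-- The augmentation `a_Y := μ_Y ∘ F(v_{F Y}) ∘ F(Σ(ε_{Ω(F Y)})) : H(Ω(F Y)) → F Y`. -/
def a (Y : 𝒞) : HObj Sg C F (Om.obj (F.obj Y)) ⟶ F.obj Y :=
  F.map (Sg.map (C.ε.app (Om.obj (F.obj Y)))) ≫
    F.map (adj.counit.app (F.obj Y)) ≫
      F.μ.app Y

/-- The dual Freudenthal suspension map
`m_Y := Ω(μ_Y) ∘ Ω(F(v_{F Y})) ∘ Ω(F(Σ(ε_{Ω(F Y)}))) : T̃(Ω(F Y)) → Ω(F Y)`. -/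
def m (Y : 𝒞) : TtObj Sg Om C F (Om.obj (F.obj Y)) ⟶ Om.obj (F.obj Y) :=
  Om.map (F.map (Sg.map (C.ε.app (Om.obj (F.obj Y))))) ≫
    Om.map (F.map (adj.counit.app (F.obj Y))) ≫
      Om.map (F.μ.app Y)

/-- The augmentation of `F`-algebras induced by a copointed endofunctor `γ : K ⟶ 𝟭 𝒞`: its
component at an algebra `A` is the algebra morphism `F (K A) ⟶ A` extending `γ_A`. For
`K = Σ ∘ C ∘ Ω`, its component at the free algebra `F Y` is the map `a_Y`. -/
def algebraAugmentation {K : 𝒞 ⥤ 𝒞} (γ : K ⟶ 𝟭 𝒞) :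
    (F.forget ⋙ K) ⋙ F.free ⟶ 𝟭 F.Algebra :=
  Functor.whiskerRight (Functor.whiskerLeft F.forget γ) F.free ≫ F.adj.counit

lemma algebraAugmentation_app_f {K : 𝒞 ⥤ 𝒞} (γ : K ⟶ 𝟭 𝒞) (A : F.Algebra) :
    ((algebraAugmentation F γ).app A).f = F.map (γ.app A.A) ≫ A.a := by
  have counit_f : (F.adj.counit.app A).f = A.a := by rw [Monad.adj_counit]
  exact congrArg (F.map (γ.app A.A) ≫ ·) counit_f

-- For any `θ : G ⟶ 𝟭`, the naturality square of `θ` at its own component `θ_A` says that `θ_A`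
-- coequalizes `θ_{G A}` and `G(θ_A)`.
theorem dual_freudenthal_augments_general {K : 𝒞 ⥤ 𝒞} (γ : K ⟶ 𝟭 𝒞) (A : F.Algebra) :
    (F.map (γ.app (F.obj (K.obj A.A))) ≫ F.μ.app (K.obj A.A)) ≫ F.map (γ.app A.A) ≫ A.a =
      F.map (K.map (F.map (γ.app A.A) ≫ A.a)) ≫ F.map (γ.app A.A) ≫ A.a := by
  let θ := algebraAugmentation F γ
  have naturality_f : (θ.app (F.free.obj (K.obj A.A))).f ≫ (θ.app A).f =
      F.map (K.map (θ.app A).f) ≫ (θ.app A).f :=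
    congrArg Monad.Algebra.Hom.f (θ.naturality (θ.app A)).symm
  rw [algebraAugmentation_app_f, algebraAugmentation_app_f] at naturality_f
  exact naturality_f

/-- The natural transformation `Σ ∘ C ∘ Ω ⟶ 𝟭` with components `v_X ∘ Σ(ε_{Ω X})`. -/
def suspensionCounit : Om ⋙ C.toFunctor ⋙ Sg ⟶ 𝟭 𝒞 :=
  Functor.whiskerLeft Om (Functor.whiskerRight C.ε Sg) ≫ adj.counit

lemma a_eq_map_suspensionCounit_comp_μ (Y : 𝒞) :
    a Sg Om adj C F Y =
      F.map ((suspensionCounit Sg Om adj C).app (F.obj Y)) ≫ F.μ.app Y := by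
  simp [a, HObj, suspensionCounit]

lemma σ_eq_a (X : 𝒞) : σ Sg Om adj C F X = a Sg Om adj C F (Sg.obj (C.obj X)) :=
  rfl

lemma m_eq_map_a (Y : 𝒞) : m Sg Om adj C F Y = Om.map (a Sg Om adj C F Y) := by
  simp [m, a, HObj, TtObj]

/-- The dual Freudenthal suspension map augments the bar construction:
`a_Y ∘ σ_{Ω(F Y)} = a_Y ∘ H(m_Y)`. -/
theorem dual_freudenthal_augments (Y : 𝒞) :
    σ Sg Om adj C F (Om.obj (F.obj Y)) ≫ a Sg Om adj C F Y
      = HMap Sg C F (m Sg Om adj C F Y) ≫ a Sg Om adj C F Y := by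
  rw [σ_eq_a, m_eq_map_a, a_eq_map_suspensionCounit_comp_μ, a_eq_map_suspensionCounit_comp_μ]
  exact dual_freudenthal_augments_general F (suspensionCounit Sg Om adj C) (F.free.obj Y)

end Stmt13
end
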